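/- arXiv:1711.02777 — 2 statements merged into one kernel-verified Lean document; each statement's English description precedes it below -/
import Mathlib

section
/- Let n ≥ 0 and 0 ≤ r ≤ n, and let σ be a permutation of {1,...,n} such that σ(1) < σ(2) < ... < σ(r) and σ(r+1) < σ(r+2) < ... < σ(n). Then the number of inversions of σ, i.e. #{(x,y) : 1 ≤ x < y ≤ n and σ(x) > σ(y)}, equals Σ_{i=1}^{n−r} (r + i − σ(r+i)). -/
/-!
For a fixed position `j`, counted from `0`, compare the `j` positions to its left with the `σ j`
positions whose value is below `σ j`. The positions to the left with a smaller value lie in both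
sets; what remains corresponds to the inversions ending at `j`, respectively starting at `j`. So
`j - σ j` is the number of inversions ending at `j` minus the number starting at `j`. For a shuffle,
every inversion ends in the second block and none starts there, so summing over that block counts
each inversion once.
-/

open Finset Function

section LinearOrder

variable {α β : Type*} [Fintype α] [LinearOrder α] [LinearOrder β]

/-- The inversions of a map between linear orders, as pairs of positions (not of values), the
smaller position first. -/
def inversions (f : α → β) : Finset (α × α) := {p | p.1 < p.2 ∧ f p.2 < f p.1}

lemma mem_inversions {f : α → β} {p : α × α} :
    p ∈ inversions f ↔ p.1 < p.2 ∧ f p.2 < f p.1 := by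
  simp [inversions]

lemma card_inversions_snd_eq (f : α → β) (j : α) :
    #{p ∈ inversions f | p.2 = j} = #{i | i < j ∧ f j < f i} :=
  card_nbij' Prod.fst (·, j) (by grind [Set.MapsTo, mem_inversions])
    (by grind [Set.MapsTo, mem_inversions]) (by grind [Set.LeftInvOn]) (by grind [Set.LeftInvOn])

lemma card_inversions_fst_eq (f : α → β) (i : α) :
    #{p ∈ inversions f | p.1 = i} = #{j | i < j ∧ f j < f i} :=
  card_nbij' Prod.snd (i, ·) (by grind [Set.MapsTo, mem_inversions])
    (by grind [Set.MapsTo, mem_inversions]) (by grind [Set.LeftInvOn]) (by grind [Set.LeftInvOn])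

lemma card_lt_eq_card_inversions_add {f : α → β} (hf : Injective f) (j : α) :
    #{i | i < j} = #{p ∈ inversions f | p.2 = j} + #{i | i < j ∧ f i < f j} := by
  rw [card_inversions_snd_eq, ← card_union_of_disjoint (disjoint_filter.2 fun i _ h ↦ by grind),
    ← filter_or]
  congr 1 with i
  grind [hf.eq_iff]

lemma card_apply_lt_eq_card_inversions_add (f : α → β) (j : α) :
    #{i | f i < f j} = #{p ∈ inversions f | p.1 = j} + #{i | i < j ∧ f i < f j} := by
  rw [card_inversions_fst_eq, ← card_union_of_disjoint (disjoint_filter.2 fun i _ h ↦ by grind),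
    ← filter_or]
  congr 1 with i
  grind

lemma sum_card_lt_sub_card_apply_lt {f : α → β} (hf : Injective f) (s : Finset α) :
    ∑ j ∈ s, ((#{i | i < j} : ℤ) - #{i | f i < f j}) =
      #{p ∈ inversions f | p.2 ∈ s} - #{p ∈ inversions f | p.1 ∈ s} := by
  simp_rw [card_lt_eq_card_inversions_add hf, card_apply_lt_eq_card_inversions_add f,
    ← sum_card_fiberwise_eq_card_filter]
  push_cast
  simp only [add_sub_add_right_eq_sub, sum_sub_distrib]

end LinearOrder

lemma card_perm_apply_lt {n : ℕ} (σ : Equiv.Perm (Fin n)) (k : Fin n) : #{i | σ i < k} = k := by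
  rw [← Fin.card_Iio k, ← card_map σ.toEmbedding]
  congr 1 with i
  simp

theorem inversions_of_shuffle_general {n : ℕ} (σ : Equiv.Perm (Fin n)) (s : Finset (Fin n))
    (hs : ∀ p ∈ inversions σ, p.1 ∉ s ∧ p.2 ∈ s) :
    (#(inversions σ) : ℤ) = ∑ j ∈ s, ((j : ℤ) - (σ j : ℤ)) := by
  have ends_in : {p ∈ inversions σ | p.2 ∈ s} = inversions σ :=
    filter_true_of_mem fun p hp ↦ (hs p hp).2
  have none_starts_in : {p ∈ inversions σ | p.1 ∈ s} = ∅ :=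
    filter_false_of_mem fun p hp ↦ (hs p hp).1
  simpa [filter_gt_eq_Iio, card_perm_apply_lt, ends_in, none_starts_in] using
    (sum_card_lt_sub_card_apply_lt σ.injective s).symm

/-- Counting the cohomological degree in Bott's theorem: if a permutation `σ` of
`{1,…,n}` (here realized 0-indexed on `Fin n`) is increasing on the first `r`
positions and on the remaining `n - r` positions, then its number of inversions
equals `Σ_{i=1}^{n-r} (r + i - σ(r+i))`, i.e. the sum of `j - σ(j)` over the last
`n - r` positions. -/
theorem inversions_of_shuffle (n r : ℕ) (hr : r ≤ n) (σ : Equiv.Perm (Fin n))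
    (h1 : ∀ i j : Fin n, i < j → (j : ℕ) < r → σ i < σ j)
    (h2 : ∀ i j : Fin n, r ≤ (i : ℕ) → i < j → σ i < σ j) :
    ((Finset.univ.filter fun p : Fin n × Fin n => p.1 < p.2 ∧ σ p.2 < σ p.1).card : ℤ) =
      ∑ j ∈ Finset.univ.filter (fun j : Fin n => r ≤ (j : ℕ)),
        (((j : ℕ) : ℤ) - ((σ j : ℕ) : ℤ)) := by
  refine inversions_of_shuffle_general σ _ fun p hp ↦ ?_
  grind [mem_inversions]
end

section
/- Let n ≥ 2, m = ⌊n/2⌋, and fix integers k, d with 1 ≤ k ≤ m and d ≥ 1. Then Z_k^{(d)} ⊆ Z_k^d and Z_k^{(d)} ⊆ Z_k^{(d+1)}. (These inclusions imply that for each j the induced maps Ext^j_S(S/I_{2k}^{(d)}, S) → Ext^j_S(S/I_{2k}^{d}, S) and Ext^j_S(S/I_{2k}^{(d)}, S) → Ext^j_S(S/I_{2k}^{(d+1)}, S) are injective.) -/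
/-- `IsPart k y`: `y` encodes a partition with at most `k` parts (1-indexed),
with `y i = 0` for `i = 0` and for `i > k`. -/
def IsPart (k : ℕ) (y : ℕ → ℤ) : Prop :=
  (∀ i, 1 ≤ i → i < k → y (i + 1) ≤ y i) ∧
  (∀ i, 1 ≤ i → i ≤ k → 0 ≤ y i) ∧
  (∀ i, i = 0 ∨ k < i → y i = 0)


/-- The size `|y|` of a partition with at most `k` parts. -/
def psize (k : ℕ) (y : ℕ → ℤ) : ℤ := ∑ i ∈ Finset.Icc 1 k, y i

/-- The set `𝒵_k^d` indexing the subquotients of `S/I_{2k}^d`: pairs `(z,l)` with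
`z ∈ P(m)`, `0 ≤ l ≤ k-1`, `z₁ = ⋯ = z_{l+1} ≤ d-1`, and
`|z| + (d-z₁)l + 1 ≤ kd ≤ |z| + (d-z₁)(l+1)`. -/
def Zkd (m k d : ℕ) : Set ((ℕ → ℤ) × ℕ) :=
  { w | IsPart m w.1 ∧ w.2 < k ∧
    (∀ i, 1 ≤ i → i ≤ w.2 + 1 → w.1 i = w.1 1) ∧ w.1 1 ≤ (d : ℤ) - 1 ∧
    psize m w.1 + ((d : ℤ) - w.1 1) * (w.2 : ℤ) + 1 ≤ (k : ℤ) * (d : ℤ) ∧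
    (k : ℤ) * (d : ℤ) ≤ psize m w.1 + ((d : ℤ) - w.1 1) * ((w.2 : ℤ) + 1) }


/-- The set `𝒵_k^{(d)}` indexing the subquotients of `S/I_{2k}^{(d)}`: pairs `(z,k-1)`
with `z ∈ P(m)`, `z₁ = ⋯ = z_k`, and `z_k + z_{k+1} + ⋯ + z_m ≤ d-1`. -/
def Zsym (m k d : ℕ) : Set ((ℕ → ℤ) × ℕ) :=
  { w | IsPart m w.1 ∧ w.2 = k - 1 ∧ (∀ i, 1 ≤ i → i ≤ k → w.1 i = w.1 1) ∧
    (∑ i ∈ Finset.Icc k m, w.1 i) ≤ (d : ℤ) - 1 }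

/-! With `T = z_k + ⋯ + z_m` and `z₁ = ⋯ = z_k` one has `|z| = (k - 1) z₁ + T`, so for `l = k - 1`
the two inequalities `|z| + (d - z₁)l + 1 ≤ kd ≤ |z| + (d - z₁)(l + 1)` collapse to `T ≤ d - 1` and
`z₁ ≤ T`. The latter is automatic because `z₁ = z_k` is a summand of `T`; hence `𝒵_k^{(d)}` is the
slice `l = k - 1` of `𝒵_k^d`. -/

theorem IsPart.nonneg {m : ℕ} {z : ℕ → ℤ} (hz : IsPart m z) (i : ℕ) : 0 ≤ z i := by
  by_cases hi : i = 0 ∨ m < i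
  · exact (hz.2.2 i hi).ge
  · exact hz.2.1 i (by lia) (by lia)

theorem psize_eq_mul_add_sum_Icc {m l : ℕ} {z : ℕ → ℤ} {c : ℤ} (hlm : l ≤ m)
    (hc : ∀ i, 1 ≤ i → i ≤ l → z i = c) :
    psize m z = l * c + ∑ i ∈ Finset.Icc (l + 1) m, z i := by
  have sum_head : ∑ i ∈ Finset.Ioc 0 l, z i = l * c := by
    rw [Finset.sum_congr rfl fun i hi ↦ hc i (Finset.mem_Ioc.1 hi).1 (Finset.mem_Ioc.1 hi).2]
    simp
  calc
    psize m z = ∑ i ∈ Finset.Ioc 0 m, z i := rfl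
    _ = ∑ i ∈ Finset.Ioc 0 l, z i + ∑ i ∈ Finset.Ioc l m, z i :=
      (Finset.sum_Ioc_consecutive z l.zero_le hlm).symm
    _ = l * c + ∑ i ∈ Finset.Icc (l + 1) m, z i := by
      rw [sum_head, ← Finset.Icc_add_one_left_eq_Ioc]

theorem mem_Zsym_iff_mem_Zkd {m l d : ℕ} {z : ℕ → ℤ} (hlm : l < m) :
    (z, l) ∈ Zsym m (l + 1) d ↔ (z, l) ∈ Zkd m (l + 1) d := by
  simp only [Zsym, Zkd, Set.mem_ofPred_eq, Nat.add_sub_cancel, Nat.lt_add_one, true_and,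
    and_congr_right_iff]
  intro hz hconst
  have size_eq : psize m z = l * z 1 + ∑ i ∈ Finset.Icc (l + 1) m, z i :=
    psize_eq_mul_add_sum_Icc hlm.le fun i hi hil ↦ hconst i hi (by lia)
  have le_tail : z 1 ≤ ∑ i ∈ Finset.Icc (l + 1) m, z i := by
    rw [← hconst (l + 1) (by lia) le_rfl]
    exact Finset.single_le_sum (fun i _ ↦ hz.nonneg i) (Finset.left_mem_Icc.2 hlm)
  rw [size_eq]
  push_cast
  constructor
  · intro tail_le
    exact ⟨le_tail.trans tail_le, by linarith, by linarith⟩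
  · rintro ⟨-, lower, -⟩
    linarith

theorem Zsym_eq_sep_Zkd {m k d : ℕ} (hk : 1 ≤ k) (hkm : k ≤ m) :
    Zsym m k d = {w ∈ Zkd m k d | w.2 = k - 1} := by
  obtain ⟨l, rfl⟩ := Nat.exists_eq_add_of_le' hk
  ext ⟨z, j⟩
  constructor
  · intro hw
    obtain rfl : j = l := hw.2.1
    exact ⟨(mem_Zsym_iff_mem_Zkd hkm).1 hw, rfl⟩
  · rintro ⟨hw, hj⟩
    obtain rfl : j = l := hj
    exact (mem_Zsym_iff_mem_Zkd hkm).2 hw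

theorem Zsym_mono (m k : ℕ) : Monotone (Zsym m k) := by
  rintro d e hde w ⟨hz, hl, hconst, hT⟩
  exact ⟨hz, hl, hconst, hT.trans (by lia)⟩

/-- Theorem G (combinatorial form): `𝒵_k^{(d)} ⊆ 𝒵_k^d` and `𝒵_k^{(d)} ⊆ 𝒵_k^{(d+1)}`;
these inclusions imply that the induced maps
`Ext^j_S(S/I_{2k}^{(d)}, S) → Ext^j_S(S/I_{2k}^d, S)` and
`Ext^j_S(S/I_{2k}^{(d)}, S) → Ext^j_S(S/I_{2k}^{(d+1)}, S)` are injective. -/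
theorem Zsym_subsets (n m k d : ℕ) (h2 : 2 ≤ n) (hm : m = n / 2) (hk1 : 1 ≤ k)
    (hkm : k ≤ m) (hd : 1 ≤ d) :
    Zsym m k d ⊆ Zkd m k d ∧ Zsym m k d ⊆ Zsym m k (d + 1) :=
  ⟨(Zsym_eq_sep_Zkd hk1 hkm).subset.trans (Set.sep_subset _ _), Zsym_mono m k d.le_succ⟩
end
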